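/- Fix d, n, K ∈ ℕ with K ≥ 1 and λ, σ > 0. For each episode t = 1,…,n let φ_{t,1},…,φ_{t,m_t} ∈ ℝ^d be feature vectors with m_t ≤ K and ‖φ_{t,k}‖₂ ≤ 1 for all k, and define the positive definite matrices Σ_t ∈ ℝ^{d×d} by Σ_t^{-1} = (1/λ²) I + (1/σ²) Σ_{τ=1}^{t-1} Σ_{k=1}^{m_τ} φ_{τ,k} φ_{τ,k}ᵀ. Then Σ_{t=1}^n Σ_{k=1}^{m_t} √( φ_{t,k}ᵀ Σ_t φ_{t,k} ) ≤ K λ √( d n ln(1 + nKλ²/(dσ²)) / ln(1 + λ²/σ²) ). -/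

import Mathlib

open Matrix Finset

lemma aux_psd {d : ℕ} (v : Fin d → ℝ) : (vecMulVec v v).PosSemidef := by
  simpa using posSemidef_vecMulVec_self_star v

lemma aux_det_rank_one {d : ℕ} {A : Matrix (Fin d) (Fin d) ℝ} (hA : A.PosDef) (c : ℝ)
    (v : Fin d → ℝ) :
    (A + c • vecMulVec v v).det = A.det * (1 + c * (v ⬝ᵥ A⁻¹ *ᵥ v)) := by
  have h := det_add_replicateCol_mul_replicateRow (ι := Unit)
    (A := A) (isUnit_iff_ne_zero.2 hA.det_pos.ne') (c • v) v
  have e : replicateCol Unit (c • v) * replicateRow Unit v = c • vecMulVec v v := by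
    ext i j
    simp [Matrix.mul_apply, vecMulVec_apply, mul_assoc]
  rw [e] at h
  rw [h, det_unique (n := Unit)]
  congr 1
  rw [Matrix.mul_assoc]
  simp only [Matrix.add_apply, Matrix.one_apply_eq]
  congr 1
  rw [← replicateCol_mulVec, Matrix.mulVec_smul]
  simp [Matrix.mul_apply, dotProduct, Finset.mul_sum]
  refine Finset.sum_congr rfl fun i _ => by ring

lemma aux_quad_nonneg {d : ℕ} {A : Matrix (Fin d) (Fin d) ℝ} (hA : A.PosDef)
    (v : Fin d → ℝ) : 0 ≤ v ⬝ᵥ A⁻¹ *ᵥ v := by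
  simpa using hA.inv.posSemidef.dotProduct_mulVec_nonneg v

lemma aux_det_sum {d : ℕ} {ι : Type*} {A : Matrix (Fin d) (Fin d) ℝ} (hA : A.PosDef) {c : ℝ}
    (hc : 0 ≤ c) (s : Finset ι) (v : ι → Fin d → ℝ) :
    A.det ≤ (A + c • ∑ k ∈ s, vecMulVec (v k) (v k)).det := by
  classical
  induction s using Finset.induction_on with
  | empty => simp
  | insert a s ha ih =>
    have hB : (A + c • ∑ k ∈ s, vecMulVec (v k) (v k)).PosDef :=
      hA.add_posSemidef ((posSemidef_sum _ fun k _ => aux_psd (v k)).smul hc)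
    rw [Finset.sum_insert ha, smul_add, add_comm (c • vecMulVec (v a) (v a)), ← add_assoc,
      aux_det_rank_one hB]
    refine ih.trans (le_mul_of_one_le_right hB.det_pos.le ?_)
    have := mul_nonneg hc (aux_quad_nonneg hB (v a))
    linarith

lemma aux_det_step {d : ℕ} {ι : Type*} [Fintype ι] {A : Matrix (Fin d) (Fin d) ℝ}
    (hA : A.PosDef) {c : ℝ} (hc : 0 ≤ c) (v : ι → Fin d → ℝ) (k : ι) :
    A.det * (1 + c * (v k ⬝ᵥ A⁻¹ *ᵥ v k)) ≤ (A + c • ∑ k, vecMulVec (v k) (v k)).det := by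
  classical
  rw [← aux_det_rank_one hA, ← Finset.add_sum_erase _ _ (Finset.mem_univ k), smul_add, ← add_assoc]
  exact aux_det_sum (hA.add_posSemidef ((aux_psd (v k)).smul hc)) hc _ _

lemma aux_quad_le {d : ℕ} {B : Matrix (Fin d) (Fin d) ℝ} {L : ℝ} (hL : 0 < L)
    (hB : B.PosSemidef) (hA : (L⁻¹ • (1 : Matrix (Fin d) (Fin d) ℝ) + B).PosDef)
    (v : Fin d → ℝ) (hv : v ⬝ᵥ v ≤ 1) :
    v ⬝ᵥ (L⁻¹ • (1 : Matrix (Fin d) (Fin d) ℝ) + B)⁻¹ *ᵥ v ≤ L := by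
  set A := L⁻¹ • (1 : Matrix (Fin d) (Fin d) ℝ) + B with hAdef
  set x := A⁻¹ *ᵥ v with hx
  have hAx : A *ᵥ x = v := by
    rw [hx, mulVec_mulVec, mul_nonsing_inv _ (isUnit_iff_ne_zero.2 hA.det_pos.ne'), one_mulVec]
  have h1 : v ⬝ᵥ x = L⁻¹ * (x ⬝ᵥ x) + x ⬝ᵥ B *ᵥ x := by
    rw [dotProduct_comm, ← hAx, hAdef, add_mulVec, dotProduct_add, smul_mulVec, one_mulVec,
      dotProduct_smul, smul_eq_mul]
  have h2 : 0 ≤ x ⬝ᵥ B *ᵥ x := by simpa using hB.dotProduct_mulVec_nonneg x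
  have h3 : (v ⬝ᵥ x) ^ 2 ≤ (v ⬝ᵥ v) * (x ⬝ᵥ x) := by
    have := Finset.sum_mul_sq_le_sq_mul_sq Finset.univ v x
    simpa [dotProduct, sq] using this
  have hxx : 0 ≤ x ⬝ᵥ x := by
    simpa using dotProduct_star_self_nonneg x
  have h4 : x ⬝ᵥ x ≤ L * (v ⬝ᵥ x) := by
    rw [h1, mul_add, ← mul_assoc, mul_inv_cancel₀ hL.ne']
    nlinarith
  by_contra hlt
  push Not at hlt
  nlinarith

lemma aux_log_det {d : ℕ} (hd : 0 < d) {A : Matrix (Fin d) (Fin d) ℝ} (hA : A.PosDef) :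
    Real.log A.det ≤ d * Real.log (A.trace / d) := by
  have hd' : (0 : ℝ) < d := by exact_mod_cast hd
  rw [hA.1.det_eq_prod_eigenvalues, hA.1.trace_eq_sum_eigenvalues]
  simp only [RCLike.ofReal_real_eq_id, id]
  rw [Real.log_prod (fun i _ => (hA.eigenvalues_pos i).ne')]
  have := strictConcaveOn_log_Ioi.concaveOn.le_map_sum (t := Finset.univ)
    (w := fun _ : Fin d => (d : ℝ)⁻¹) (p := hA.1.eigenvalues) (fun _ _ => by positivity)
    (by simp [hd'.ne']) (fun i _ => hA.eigenvalues_pos i)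
  simp only [smul_eq_mul, ← Finset.mul_sum] at this
  rw [inv_mul_le_iff₀ hd'] at this
  rwa [div_eq_inv_mul]

lemma aux_log {w L s : ℝ} (hw : 0 ≤ w) (hwL : w ≤ L) (hL : 0 < L) (hs : 0 < s) :
    w * Real.log (1 + L / s) ≤ L * Real.log (1 + w / s) := by
  have hx : (1 : ℝ) ∈ Set.Ioi (0 : ℝ) := by simp
  have hy : 1 + L / s ∈ Set.Ioi (0 : ℝ) := by simp only [Set.mem_Ioi]; positivity
  have ha : 0 ≤ 1 - w / L := by rw [sub_nonneg, div_le_one hL]; exact hwL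
  have hb : 0 ≤ w / L := by positivity
  have h := strictConcaveOn_log_Ioi.concaveOn.2 hx hy ha hb (by ring)
  simp only [smul_eq_mul, Real.log_one, mul_zero, zero_add] at h
  have e : (1 - w / L) * 1 + w / L * (1 + L / s) = 1 + w / s := by
    field_simp
    ring
  rw [e, div_mul_eq_mul_div, div_le_iff₀ hL] at h
  linarith

theorem stmt_6 {d n K : ℕ} (hd : 0 < d) (hK : 1 ≤ K) (lam σ : ℝ)
    (hlam : 0 < lam) (hσ : 0 < σ)
    (m : Fin n → ℕ) (hm : ∀ t, m t ≤ K)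
    (φ : (t : Fin n) → Fin (m t) → Fin d → ℝ)
    (hφ : ∀ t k, Real.sqrt (φ t k ⬝ᵥ φ t k) ≤ 1)
    (Sig : Fin n → Matrix (Fin d) (Fin d) ℝ)
    (hSig : ∀ t, Sig t =
      ((lam ^ 2)⁻¹ • (1 : Matrix (Fin d) (Fin d) ℝ) +
        (σ ^ 2)⁻¹ • ∑ τ ∈ Finset.Iio t, ∑ k, vecMulVec (φ τ k) (φ τ k))⁻¹) :
    ∑ t, ∑ k, Real.sqrt (φ t k ⬝ᵥ (Sig t).mulVec (φ t k)) ≤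
      K * lam * Real.sqrt (d * n * Real.log (1 + n * K * lam ^ 2 / (d * σ ^ 2)) /
        Real.log (1 + lam ^ 2 / σ ^ 2)) := by
  have hd' : (0 : ℝ) < d := by exact_mod_cast hd
  have hL : 0 < lam ^ 2 := by positivity
  have hs : 0 < σ ^ 2 := by positivity
  have hφ1 : ∀ t k, φ t k ⬝ᵥ φ t k ≤ 1 := fun t k => by
    simpa using (Real.sqrt_le_left (by norm_num)).1 (hφ t k)
  set S : ℕ → Matrix (Fin d) (Fin d) ℝ := fun s =>
    ∑ τ ∈ Finset.univ.filter (fun τ : Fin n => τ.val < s), ∑ k, vecMulVec (φ τ k) (φ τ k) with hS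
  set A : ℕ → Matrix (Fin d) (Fin d) ℝ := fun s =>
    (lam ^ 2)⁻¹ • (1 : Matrix (Fin d) (Fin d) ℝ) + (σ ^ 2)⁻¹ • S s with hA
  have hSpsd : ∀ s, ((σ ^ 2)⁻¹ • S s).PosSemidef := fun s =>
    (posSemidef_sum _ fun τ _ => posSemidef_sum _ fun k _ => aux_psd _).smul (by positivity)
  have hApd : ∀ s, (A s).PosDef := fun s =>
    (Matrix.PosDef.one.smul (by positivity : (0:ℝ) < (lam ^ 2)⁻¹)).add_posSemidef (hSpsd s)
  have hSigA : ∀ t : Fin n, Sig t = (A t.val)⁻¹ := fun t => by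
    rw [hSig t]
    have : Finset.Iio t = Finset.univ.filter (fun τ : Fin n => τ.val < t.val) := by
      ext τ; simp
    rw [this]
  have hstep : ∀ t : Fin n, A (t.val + 1) =
      A t.val + (σ ^ 2)⁻¹ • ∑ k, vecMulVec (φ t k) (φ t k) := fun t => by
    have : Finset.univ.filter (fun τ : Fin n => τ.val < t.val + 1) =
        insert t (Finset.univ.filter (fun τ : Fin n => τ.val < t.val)) := by
      ext τ
      simp only [Finset.mem_filter, Finset.mem_univ, true_and, Finset.mem_insert, Fin.ext_iff]
      omega
    simp only [hA, hS]
    rw [this, Finset.sum_insert (by simp), smul_add]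
    abel
  have hw : ∀ t : Fin n, ∃ w : ℝ, 0 ≤ w ∧ w ≤ lam ^ 2 ∧
      (∀ k, φ t k ⬝ᵥ (Sig t).mulVec (φ t k) ≤ w) ∧
      Real.log (1 + w / σ ^ 2) ≤
        Real.log (A (t.val + 1)).det - Real.log (A t.val).det := by
    intro t
    rcases isEmpty_or_nonempty (Fin (m t)) with he | hne
    · refine ⟨0, le_rfl, hL.le, fun k => he.elim k, ?_⟩
      rw [hstep t]
      simp
    · obtain ⟨k₀, hk₀⟩ := Finite.exists_max (fun k => φ t k ⬝ᵥ (Sig t).mulVec (φ t k))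
      have h0 : 0 ≤ φ t k₀ ⬝ᵥ (Sig t).mulVec (φ t k₀) := by
        rw [hSigA]; exact aux_quad_nonneg (hApd _) _
      refine ⟨φ t k₀ ⬝ᵥ (Sig t).mulVec (φ t k₀), h0, ?_, hk₀, ?_⟩
      · rw [hSigA]; exact aux_quad_le hL (hSpsd _) (hApd _) _ (hφ1 t k₀)
      · have h := aux_det_step (hApd t.val) (c := (σ ^ 2)⁻¹) (by positivity) (φ t) k₀
        rw [← hstep t, ← hSigA t, inv_mul_eq_div] at h
        rw [le_sub_iff_add_le', ← Real.log_mul (hApd _).det_pos.ne' (by positivity)]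
        exact Real.log_le_log (mul_pos (hApd _).det_pos (by positivity)) h
  choose w hw0 hwL hwk hwlog using hw
  -- telescoping
  have htel : ∑ t, Real.log (1 + w t / σ ^ 2) ≤
      Real.log (A n).det - Real.log (A 0).det := by
    refine (Finset.sum_le_sum fun t _ => hwlog t).trans_eq ?_
    rw [Fin.sum_univ_eq_sum_range
      (fun s => Real.log (A (s + 1)).det - Real.log (A s).det) n,
      Finset.sum_range_sub (fun s => Real.log (A s).det)]
  have hA0 : Real.log (A 0).det = d * Real.log ((lam ^ 2)⁻¹) := by
    simp only [hA, hS]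
    simp [det_smul]
  have htr : (A n).trace ≤ (lam ^ 2)⁻¹ * d + (σ ^ 2)⁻¹ * (n * K) := by
    simp only [hA, hS]
    rw [trace_add, trace_smul, trace_smul, trace_one, trace_sum]
    simp only [smul_eq_mul, Fintype.card_fin, trace_sum, trace_vecMulVec]
    gcongr
    calc _ ≤ ∑ τ ∈ Finset.univ.filter (fun τ : Fin n => τ.val < n), (K : ℝ) := by
          refine Finset.sum_le_sum fun τ _ => ?_
          calc _ ≤ ∑ k : Fin (m τ), (1 : ℝ) := Finset.sum_le_sum fun k _ => hφ1 τ k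
            _ = m τ := by simp
            _ ≤ K := by exact_mod_cast hm τ
      _ = n * K := by simp
  have htot : ∑ t, Real.log (1 + w t / σ ^ 2) ≤
      d * Real.log (1 + n * K * lam ^ 2 / (d * σ ^ 2)) := by
    have : Nonempty (Fin d) := ⟨⟨0, hd⟩⟩
    have htp : 0 < (A n).trace := (hApd n).trace_pos
    have h1 := aux_log_det hd (hApd n)
    have h2 : Real.log ((A n).trace / d) ≤
        Real.log ((1 + n * K * lam ^ 2 / (d * σ ^ 2)) * (lam ^ 2)⁻¹) := by
      refine Real.log_le_log (by positivity) ?_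
      rw [div_le_iff₀ hd']
      refine htr.trans_eq ?_
      field_simp
    rw [Real.log_mul (by positivity) (by positivity)] at h2
    have h3 := mul_le_mul_of_nonneg_left h2 hd'.le
    rw [mul_add] at h3
    linarith
  have hlogpos : 0 < Real.log (1 + lam ^ 2 / σ ^ 2) :=
    Real.log_pos (by have : 0 < lam ^ 2 / σ ^ 2 := by positivity
                     linarith)
  have hsumw : ∑ t, w t ≤ lam ^ 2 * (d * Real.log (1 + n * K * lam ^ 2 / (d * σ ^ 2)) /
      Real.log (1 + lam ^ 2 / σ ^ 2)) := by
    rw [← mul_div_assoc, le_div_iff₀ hlogpos, Finset.sum_mul]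
    calc _ ≤ ∑ t, lam ^ 2 * Real.log (1 + w t / σ ^ 2) :=
          Finset.sum_le_sum fun t _ => aux_log (hw0 t) (hwL t) hL hs
      _ = lam ^ 2 * ∑ t, Real.log (1 + w t / σ ^ 2) := by rw [Finset.mul_sum]
      _ ≤ _ := by gcongr
  have hcs : ∑ t, Real.sqrt (w t) ≤ Real.sqrt (n * ∑ t, w t) := by
    refine Real.le_sqrt_of_sq_le ?_
    have := sq_sum_le_card_mul_sum_sq (s := Finset.univ) (f := fun t => Real.sqrt (w t))
    simpa [Real.sq_sqrt (hw0 _)] using this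
  calc _ ≤ ∑ t, K * Real.sqrt (w t) := by
        refine Finset.sum_le_sum fun t _ => ?_
        calc _ ≤ ∑ k : Fin (m t), Real.sqrt (w t) :=
              Finset.sum_le_sum fun k _ => Real.sqrt_le_sqrt (hwk t k)
          _ = m t * Real.sqrt (w t) := by simp
          _ ≤ K * Real.sqrt (w t) := by
              have : (m t : ℝ) ≤ K := by exact_mod_cast hm t
              gcongr
    _ = K * ∑ t, Real.sqrt (w t) := by rw [Finset.mul_sum]
    _ ≤ K * Real.sqrt (n * (lam ^ 2 * (d * Real.log (1 + n * K * lam ^ 2 / (d * σ ^ 2)) /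
      Real.log (1 + lam ^ 2 / σ ^ 2)))) := by
        gcongr
        exact hcs.trans (Real.sqrt_le_sqrt (by gcongr))
    _ = _ := by
        rw [mul_assoc (K : ℝ)]
        congr 1
        rw [show (n : ℝ) * (lam ^ 2 * (d * Real.log (1 + n * K * lam ^ 2 / (d * σ ^ 2)) /
          Real.log (1 + lam ^ 2 / σ ^ 2))) = lam ^ 2 * (d * n * Real.log
          (1 + n * K * lam ^ 2 / (d * σ ^ 2)) / Real.log (1 + lam ^ 2 / σ ^ 2)) by ring,
          Real.sqrt_mul hL.le, Real.sqrt_sq hlam.le]
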